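/- arXiv:1707.05216 — 3 statements merged into one kernel-verified Lean document; each statement's English description precedes it below -/
import Mathlib

section
/- There exist a constant C > 0 and M ∈ ℕ such that for all integers m ≥ M, |J_ν′(j_{mν};q²)| ≤ C · q^{−m(m+ν−2)}; that is, J_ν′(j_{mν};q²) = O(q^{−m(m+ν−2)}) as m → ∞. -/
/-!
Write `J_ν(z) = z^ν c S(z)` with `S(z) = ∑ a_k z^{2k}`. At a zero `x = j_m` the derivative is
`x^ν c S'(x)`, and since `c S(x) = 0` one may subtract `(2m/x) c S(x)`, which gives
`J_ν'(x) = 2 c x^{ν-1} ∑ (k - m) a_k x^{2k}`.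

The hypothesis on `ε_m` yields `x = q^{-m+ε}` with `0 < ε < 1` for large `m`
(`exponent_eventually_lt_one`). The denominators of `a_k` are bounded below (`qPoch_lower`), so
`|a_k x^{2k}|` is at most a constant times `q^{k(k+1)-2mk} = q^{-m²+m} q^{d²+d}`, `d = k - m`.
As `∑_{d ∈ ℤ} |d| q^{d²+d}` converges, the sum is `O(q^{-m²+m})`, and with
`x^{ν-1} = O(q^{-m(ν-1)})` the total exponent is `-m(m+ν-2)`. Without the subtraction the
weight `k ≈ m` would cost an additional factor `m`.
-/

open Filter

/-- The finite q-shifted factorial `(a;q)_n`. -/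
noncomputable def qPoch (a q : ℝ) : ℕ → ℝ := fun n => ∏ j ∈ Finset.range n, (1 - a * q ^ j)

/-- The infinite q-shifted factorial `(a;q)_∞`. -/
noncomputable def qPochInf (a q : ℝ) : ℝ := ∏' j : ℕ, (1 - a * q ^ j)

/-- The third Jackson (Hahn–Exton) q-Bessel function `J_ν(z;q²)` (base `q²`). -/
noncomputable def qBessel (ν q z : ℝ) : ℝ :=
  z ^ ν * (qPochInf (q ^ (2 * (ν + 1))) (q ^ 2) / qPochInf (q ^ 2) (q ^ 2)) *
    ∑' k : ℕ, ((-1 : ℝ) ^ k * q ^ (k * (k + 1)) * z ^ (2 * k) /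
      (qPoch (q ^ (2 * (ν + 1))) (q ^ 2) k * qPoch (q ^ 2) (q ^ 2) k))

/-- The finite products `(a;r)_k` decrease to the nonzero infinite product, hence stay away
from `0`. -/
lemma qPoch_lower (a r : ℝ) (ha0 : 0 < a) (ha1 : a < 1) (hr0 : 0 < r) (hr1 : r < 1) :
    ∃ A : ℝ, 0 < A ∧ ∀ k, A ≤ qPoch a r k := by
  have hfac : ∀ j : ℕ, 0 < 1 - a * r ^ j := fun j => by
    have h1 : r ^ j ≤ 1 := pow_le_one₀ hr0.le hr1.le
    nlinarith [pow_pos hr0 j]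
  have hsum : Summable (fun j : ℕ => ‖-(a * r ^ j)‖) := by
    simp only [norm_neg]
    exact ((summable_geometric_of_lt_one hr0.le hr1).mul_left a).norm
  have hmul : Multipliable (fun j : ℕ => 1 + -(a * r ^ j)) :=
    multipliable_one_add_of_summable hsum
  have hne : ∏' j : ℕ, (1 + -(a * r ^ j)) ≠ 0 :=
    tprod_one_add_ne_zero_of_summable (fun j => by have := hfac j; intro h; linarith) hsum
  have htend := hmul.hasProd.tendsto_prod_nat
  have hanti : Antitone (fun n => ∏ j ∈ Finset.range n, (1 + -(a * r ^ j))) := by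
    refine antitone_nat_of_succ_le fun n => ?_
    rw [Finset.prod_range_succ]
    refine mul_le_of_le_one_right (Finset.prod_nonneg fun j _ => ?_) ?_
    · have := hfac j; linarith
    · have := mul_pos ha0 (pow_pos hr0 n); linarith
  refine ⟨∏' j : ℕ, (1 + -(a * r ^ j)), lt_of_le_of_ne ?_ hne.symm, fun k => ?_⟩
  · refine ge_of_tendsto' htend fun n => Finset.prod_nonneg fun j _ => ?_
    have := hfac j; linarith
  · have := hanti.le_of_tendsto htend k
    simpa [qPoch, sub_eq_add_neg] using this

/-- Gaussian decay of `q^{k(k+1)}` beats the powers `R^{2k}` and the weight `k + 1`. -/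
lemma summable_gauss (q R : ℝ) (hq0 : 0 < q) (hq1 : q < 1) :
    Summable (fun k : ℕ => ((k : ℝ) + 1) * (q ^ (k * (k + 1)) * R ^ (2 * k))) := by
  have hbd : Summable (fun k : ℕ => ((k : ℝ) + 1) * (1 / 2 : ℝ) ^ k) := by
    have h1 := summable_pow_mul_geometric_of_norm_lt_one 1 (r := (1 / 2 : ℝ)) (by norm_num)
    have h0 := summable_geometric_of_lt_one (r := (1 / 2 : ℝ)) (by norm_num) (by norm_num)
    refine (h1.add h0).congr fun k => by simp; ring
  have ht : Tendsto (fun k : ℕ => q ^ (k + 1) * R ^ 2) atTop (nhds 0) := by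
    have := ((tendsto_add_atTop_iff_nat 1).2
      (tendsto_pow_atTop_nhds_zero_of_lt_one hq0.le hq1)).mul_const (R ^ 2)
    simpa using this
  refine Summable.of_norm_bounded_eventually_nat hbd ?_
  filter_upwards [ht.eventually (gt_mem_nhds (show (0 : ℝ) < 1 / 2 by norm_num))] with k hk
  have he : q ^ (k * (k + 1)) * R ^ (2 * k) = (q ^ (k + 1) * R ^ 2) ^ k := by
    rw [mul_pow, ← pow_mul, ← pow_mul, mul_comm k]
  have hnn : 0 ≤ q ^ (k + 1) * R ^ 2 := by positivity
  rw [he, Real.norm_of_nonneg (by positivity)]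
  gcongr

/-- Termwise differentiation of the even power series `∑ a_k z^{2k}` with Gaussian
coefficients. -/
lemma hasDerivAt_series (q A x : ℝ) (hq0 : 0 < q) (hq1 : q < 1) (a : ℕ → ℝ)
    (hA : 0 ≤ A) (ha : ∀ k, |a k| ≤ A * q ^ (k * (k + 1))) :
    Summable (fun k => a k * x ^ (2 * k)) ∧
    Summable (fun k : ℕ => a k * ((2 * k : ℕ) * x ^ (2 * k - 1))) ∧
    HasDerivAt (fun z => ∑' k, a k * z ^ (2 * k))
      (∑' k : ℕ, a k * ((2 * k : ℕ) * x ^ (2 * k - 1))) x := by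
  set R : ℝ := |x| + 1 with hR
  have hR1 : 1 ≤ R := by have := abs_nonneg x; linarith
  have hu := (summable_gauss q R hq0 hq1).mul_left (2 * A)
  have hbd : ∀ (k : ℕ) (y : ℝ), |y| ≤ R → ‖a k * ((2 * k : ℕ) * y ^ (2 * k - 1))‖ ≤
      2 * A * (((k : ℝ) + 1) * (q ^ (k * (k + 1)) * R ^ (2 * k))) := by
    intro k y hy
    have h1 : |y| ^ (2 * k - 1) ≤ R ^ (2 * k) :=
      (pow_le_pow_left₀ (abs_nonneg y) hy _).trans (pow_le_pow_right₀ hR1 (Nat.sub_le _ _))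
    rw [norm_mul, norm_mul, norm_pow, Real.norm_eq_abs, Real.norm_eq_abs, Real.norm_eq_abs,
      Nat.abs_cast]
    calc |a k| * (((2 * k : ℕ) : ℝ) * |y| ^ (2 * k - 1))
        ≤ (A * q ^ (k * (k + 1))) * ((2 * ((k : ℝ) + 1)) * R ^ (2 * k)) := by
          gcongr
          · exact ha k
          · push_cast; linarith
      _ = _ := by ring
  have hs : ∀ y : ℝ, |y| ≤ R → Summable (fun k => a k * y ^ (2 * k)) := by
    intro y hy
    refine Summable.of_norm_bounded hu fun k => ?_
    rw [norm_mul, norm_pow, Real.norm_eq_abs, Real.norm_eq_abs]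
    calc |a k| * |y| ^ (2 * k) ≤ (A * q ^ (k * (k + 1))) * R ^ (2 * k) := by
          gcongr
          exact ha k
      _ = 1 * (A * q ^ (k * (k + 1)) * R ^ (2 * k)) := by ring
      _ ≤ (2 * ((k : ℝ) + 1)) * (A * q ^ (k * (k + 1)) * R ^ (2 * k)) := by
          gcongr
          have : (0 : ℝ) ≤ k := k.cast_nonneg
          linarith
      _ = _ := by ring
  have hxR : |x| ≤ R := by linarith
  refine ⟨hs x hxR, Summable.of_norm_bounded hu fun k => hbd k x hxR, ?_⟩
  refine hasDerivAt_tsum_of_isPreconnected (t := Metric.ball (0 : ℝ) R)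
    (g := fun k z => a k * z ^ (2 * k))
    (g' := fun k z => a k * ((2 * k : ℕ) * z ^ (2 * k - 1))) hu Metric.isOpen_ball
    (convex_ball (0 : ℝ) R).isPreconnected (fun k y _ => ?_) (fun k y hy => ?_) (y₀ := x) ?_
    (hs x hxR) ?_
  · exact (hasDerivAt_pow (2 * k) y).const_mul (a k)
  · refine hbd k y ?_
    simpa using (mem_ball_zero_iff.1 hy).le
  · rw [mem_ball_zero_iff, Real.norm_eq_abs]; linarith
  · rw [mem_ball_zero_iff, Real.norm_eq_abs]; linarith

lemma summable_int_weight (q : ℝ) (hq0 : 0 < q) (hq1 : q < 1) :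
    Summable (fun d : ℤ => (d.natAbs : ℝ) * q ^ d.natAbs) := by
  have h : Summable (fun n : ℕ => (n : ℝ) * q ^ n) := by
    have := summable_pow_mul_geometric_of_norm_lt_one 1 (r := q)
      (by rwa [Real.norm_of_nonneg hq0.le])
    simpa using this
  refine Summable.of_nat_of_neg ?_ ?_ <;> simpa using h

/-- With `x = q^{-m+ε}`, `ε ≥ 0`, the weighted terms are dominated by a bi-infinite
summable weight centred at `m`, using `d² + d ≥ |d| - 1` for integers `d`. -/
lemma term_bound (q ε : ℝ) (hq0 : 0 < q) (hq1 : q < 1) (hε : 0 ≤ ε) (m k : ℕ) :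
    |(k : ℝ) - m| * (q ^ (k * (k + 1)) * (q ^ (-(m : ℝ) + ε)) ^ (2 * k)) ≤
      q ^ (-(m : ℝ) ^ 2 + m) * q⁻¹ *
        ((((k : ℤ) - m).natAbs : ℝ) * q ^ ((k : ℤ) - m).natAbs) := by
  set d : ℤ := (k : ℤ) - m with hd
  have habs : |(k : ℝ) - m| = (d.natAbs : ℝ) := by
    rw [Nat.cast_natAbs, hd]; push_cast; rfl
  have hint : (d.natAbs : ℤ) - 1 ≤ d ^ 2 + d := by
    rw [Int.natCast_natAbs]
    rcases abs_cases d with ⟨h, h'⟩ | ⟨h, h'⟩ <;> rw [h] <;> nlinarith [sq_nonneg (d + 1)]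
  have hreal : (d.natAbs : ℝ) - 1 ≤ ((k : ℝ) - m) ^ 2 + ((k : ℝ) - m) := by
    have : (((d.natAbs : ℤ) - 1 : ℤ) : ℝ) ≤ ((d ^ 2 + d : ℤ) : ℝ) := by exact_mod_cast hint
    rw [← habs]
    have h2 : ((d.natAbs : ℤ) : ℝ) = |(k : ℝ) - m| := by rw [habs]; rfl
    have h3 : (d : ℝ) = (k : ℝ) - m := by rw [hd]; push_cast; rfl
    rw [Int.cast_sub, h2, Int.cast_add, Int.cast_pow, h3, Int.cast_one] at this
    exact this
  have hpow : q ^ (k * (k + 1)) * (q ^ (-(m : ℝ) + ε)) ^ (2 * k) =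
      q ^ ((k : ℝ) * (k + 1) + (-(m : ℝ) + ε) * (2 * k)) := by
    rw [Real.rpow_add hq0 ((k : ℝ) * (k + 1)), ← Real.rpow_natCast q, ← Real.rpow_natCast (q ^ (-(m : ℝ) + ε)),
      ← Real.rpow_mul hq0.le]
    push_cast; rfl
  have hle : q ^ ((k : ℝ) * (k + 1) + (-(m : ℝ) + ε) * (2 * k)) ≤
      q ^ (-(m : ℝ) ^ 2 + m) * q⁻¹ * q ^ d.natAbs := by
    rw [← Real.rpow_neg_one q, ← Real.rpow_natCast q d.natAbs, ← Real.rpow_add hq0,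
      ← Real.rpow_add hq0]
    apply Real.rpow_le_rpow_of_exponent_ge hq0 hq1.le
    have : 0 ≤ ε * (2 * k) := by positivity
    nlinarith
  rw [habs, hpow]
  calc (d.natAbs : ℝ) * q ^ ((k : ℝ) * (k + 1) + (-(m : ℝ) + ε) * (2 * k))
      ≤ (d.natAbs : ℝ) * (q ^ (-(m : ℝ) ^ 2 + m) * q⁻¹ * q ^ d.natAbs) := by gcongr
    _ = _ := by ring

/-- The upper bound `α_m` for `ε_m` tends to `0`; only `α_m < 1` is needed. -/
lemma exponent_eventually_lt_one (q ν : ℝ) (hq0 : 0 < q) (hq1 : q < 1) :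
    ∀ᶠ m : ℕ in atTop,
      Real.log (1 - q ^ (2 * ((m : ℝ) + ν)) / (1 - q ^ (2 * (m : ℝ)))) / (2 * Real.log q) < 1 := by
  have hq2 : q ^ 2 < 1 := pow_lt_one₀ hq0.le hq1 two_ne_zero
  have h1 : Tendsto (fun m : ℕ => q ^ (2 * (m : ℝ))) atTop (nhds 0) := by
    refine (tendsto_pow_atTop_nhds_zero_of_lt_one (sq_nonneg q) hq2).congr fun m => ?_
    rw [← pow_mul, ← Real.rpow_natCast]; push_cast; rfl
  have h2 : Tendsto (fun m : ℕ => q ^ (2 * ((m : ℝ) + ν))) atTop (nhds 0) := by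
    have := h1.mul_const (q ^ (2 * ν))
    rw [zero_mul] at this
    refine this.congr fun m => ?_
    rw [← Real.rpow_add hq0]; congr 1; ring
  have h3 : Tendsto (fun m : ℕ => 1 - q ^ (2 * ((m : ℝ) + ν)) / (1 - q ^ (2 * (m : ℝ)))) atTop
      (nhds 1) := by
    have := (h2.div (h1.const_sub 1) (by norm_num)).const_sub 1
    simpa using this
  have h4 := ((Real.continuousAt_log one_ne_zero).tendsto.comp h3).div_const (2 * Real.log q)
  rw [Real.log_one, zero_div] at h4
  exact h4.eventually (gt_mem_nhds one_pos)

theorem stmt4 (q ν : ℝ) (hq0 : 0 < q) (hq1 : q < 1) (hν : -1 < ν)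
    (j : ℕ → ℝ)
    (hjpos : ∀ k, 1 ≤ k → 0 < j k)
    (hjzero : ∀ k, 1 ≤ k → qBessel ν q (j k) = 0)
    (hjmono : ∀ k, 1 ≤ k → j k < j (k + 1))
    (hjall : ∀ x, 0 < x → qBessel ν q x = 0 → ∃ k, 1 ≤ k ∧ x = j k)
    (hε : ∃ K : ℕ, ∀ k, K ≤ k →
      0 < (k : ℝ) + Real.log (j k) / Real.log q ∧
      (k : ℝ) + Real.log (j k) / Real.log q <
        Real.log (1 - q ^ (2 * ((k : ℝ) + ν)) / (1 - q ^ (2 * (k : ℝ)))) / (2 * Real.log q))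
    :
    ∃ C : ℝ, 0 < C ∧ ∃ M : ℕ, ∀ m, M ≤ m →
      |deriv (qBessel ν q) (j m)| ≤ C * q ^ (-(m : ℝ) * ((m : ℝ) + ν - 2)) := by
  have hq2 : q ^ 2 < 1 := pow_lt_one₀ hq0.le hq1 two_ne_zero
  obtain ⟨A₁, hA₁, hP⟩ := qPoch_lower (q ^ (2 * (ν + 1))) (q ^ 2) (Real.rpow_pos_of_pos hq0 _)
    (Real.rpow_lt_one hq0.le hq1 (by linarith)) (by positivity) hq2
  obtain ⟨A₂, hA₂, hQ⟩ := qPoch_lower (q ^ 2) (q ^ 2) (by positivity) hq2 (by positivity) hq2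
  obtain ⟨K, hK⟩ := hε
  obtain ⟨N, hN⟩ := eventually_atTop.1 (exponent_eventually_lt_one q ν hq0 hq1)
  set c : ℝ := qPochInf (q ^ (2 * (ν + 1))) (q ^ 2) / qPochInf (q ^ 2) (q ^ 2) with hc
  set A : ℝ := (A₁ * A₂)⁻¹ with hA
  have hApos : 0 < A := by positivity
  let a : ℕ → ℝ := fun k => (-1 : ℝ) ^ k * q ^ (k * (k + 1)) /
      (qPoch (q ^ (2 * (ν + 1))) (q ^ 2) k * qPoch (q ^ 2) (q ^ 2) k)
  have ha : ∀ k, |a k| ≤ A * q ^ (k * (k + 1)) := by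
    intro k
    have hden : A₁ * A₂ ≤ qPoch (q ^ (2 * (ν + 1))) (q ^ 2) k * qPoch (q ^ 2) (q ^ 2) k :=
      mul_le_mul (hP k) (hQ k) hA₂.le (hA₁.le.trans (hP k))
    have hpos : 0 < A₁ * A₂ := by positivity
    simp only [a]
    rw [abs_div, abs_mul, abs_pow, abs_neg, abs_one, one_pow, one_mul, abs_of_pos (pow_pos hq0 _),
      abs_of_pos (hpos.trans_le hden), hA, ← div_eq_inv_mul]
    gcongr
  have hJ : qBessel ν q = fun z => z ^ ν * c * ∑' k, a k * z ^ (2 * k) := by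
    funext z
    simp only [qBessel, a, ← hc]
    congr 2
    funext k
    ring
  set w : ℤ → ℝ := fun d => (d.natAbs : ℝ) * q ^ d.natAbs with hw
  have hwsum : Summable w := summable_int_weight q hq0 hq1
  have hwnn : ∀ d, 0 ≤ w d := fun d => by positivity
  set B : ℝ := ∑' d, w d with hB
  have hBnn : 0 ≤ B := tsum_nonneg hwnn
  -- `q ^ (-|ν - 1|)` bounds `q ^ (ε (ν - 1))` for `0 < ε < 1` whatever the sign of `ν - 1`.
  refine ⟨q ^ (-|ν - 1|) * |c| * (2 * A * q⁻¹ * B) + 1, by positivity, max (max K N) 1,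
    fun m hm => ?_⟩
  have hmK : K ≤ m := le_trans (le_trans (le_max_left _ _) (le_max_left _ _)) hm
  have hmN : N ≤ m := le_trans (le_trans (le_max_right _ _) (le_max_left _ _)) hm
  have hm1 : 1 ≤ m := le_trans (le_max_right _ _) hm
  obtain ⟨he0, he1⟩ := hK m hmK
  have he1' := he1.trans (hN m hmN)
  set ε : ℝ := (m : ℝ) + Real.log (j m) / Real.log q with hεdef
  have hxpos := hjpos m hm1
  have hxeq : j m = q ^ (-(m : ℝ) + ε) := by
    have hlog : Real.log q ≠ 0 := (Real.log_neg hq0 hq1).ne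
    rw [Real.rpow_def_of_pos hq0, hεdef, neg_add_cancel_left, mul_div_cancel₀ _ hlog,
      Real.exp_log hxpos]
  set x : ℝ := j m with hx
  obtain ⟨hs0, hs1, hd⟩ := hasDerivAt_series q A x hq0 hq1 a hApos.le ha
  have hz := hjzero m hm1
  rw [hJ] at hz
  have hcS : c * ∑' k, a k * x ^ (2 * k) = 0 := by
    have hne : x ^ ν ≠ 0 := (Real.rpow_pos_of_pos hxpos ν).ne'
    have hz' : x ^ ν * (c * ∑' k, a k * x ^ (2 * k)) = 0 := by rw [← mul_assoc]; exact hz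
    exact (mul_eq_zero.1 hz').resolve_left hne
  -- The vanishing of `c S(x)` recentres the weight `k` at `m`.
  have hder : deriv (qBessel ν q) x =
      x ^ (ν - 1) * c * ∑' k : ℕ, 2 * (((k : ℝ) - m) * (a k * x ^ (2 * k))) := by
    have h1 := ((Real.hasDerivAt_rpow_const (p := ν) (Or.inl hxpos.ne')).mul_const c).mul hd
    have h2 : deriv (qBessel ν q) x = ν * x ^ (ν - 1) * c * ∑' k, a k * x ^ (2 * k) +
        x ^ ν * c * ∑' k : ℕ, a k * ((2 * k : ℕ) * x ^ (2 * k - 1)) := by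
      rw [hJ]; exact h1.deriv
    have h3 : ∑' k : ℕ, 2 * (((k : ℝ) - m) * (a k * x ^ (2 * k))) =
        x * (∑' k : ℕ, a k * ((2 * k : ℕ) * x ^ (2 * k - 1))) -
          2 * m * ∑' k, a k * x ^ (2 * k) := by
      rw [← tsum_mul_left, ← tsum_mul_left, ← (hs1.mul_left x).tsum_sub (hs0.mul_left _)]
      congr 1
      funext k
      rcases k with _ | k
      · simp; ring
      · rw [show 2 * (k + 1) - 1 = 2 * k + 1 by omega, show 2 * (k + 1) = 2 * k + 1 + 1 by ring]
        push_cast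
        ring
    have h4 : x ^ ν = x ^ (ν - 1) * x := by
      rw [Real.rpow_sub_one hxpos.ne']; field_simp
    rw [h2, h3, h4]
    linear_combination (ν * x ^ (ν - 1) + 2 * m * x ^ (ν - 1)) * hcS
  have hinj : Function.Injective (fun k : ℕ => (k : ℤ) - m) := fun k l h => by
    simpa using h
  have hwm : Summable (fun k : ℕ => w ((k : ℤ) - m)) := hwsum.comp_injective hinj
  have hwle : ∑' k : ℕ, w ((k : ℤ) - m) ≤ B :=
    tsum_comp_le_tsum_of_inj hwsum hwnn hinj
  have hsum : |∑' k : ℕ, 2 * (((k : ℝ) - m) * (a k * x ^ (2 * k)))| ≤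
      2 * A * (q ^ (-(m : ℝ) ^ 2 + m) * q⁻¹) * B := by
    have h1 := tsum_of_norm_bounded (f := fun k : ℕ => 2 * (((k : ℝ) - m) * (a k * x ^ (2 * k))))
      (hwm.mul_left (2 * A * (q ^ (-(m : ℝ) ^ 2 + m) * q⁻¹))).hasSum (fun k => ?_)
    · refine h1.trans ?_
      rw [tsum_mul_left]
      gcongr
    · have hb := term_bound q ε hq0 hq1 he0.le m k
      rw [← hxeq] at hb
      rw [Real.norm_eq_abs, abs_mul, abs_mul, abs_mul, abs_of_pos (two_pos (α := ℝ)),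
        abs_of_pos (pow_pos hxpos (2 * k))]
      calc 2 * (|(k : ℝ) - m| * (|a k| * x ^ (2 * k)))
          ≤ 2 * (|(k : ℝ) - m| * ((A * q ^ (k * (k + 1))) * x ^ (2 * k))) := by
            gcongr
            exact ha k
        _ = 2 * A * (|(k : ℝ) - m| * (q ^ (k * (k + 1)) * x ^ (2 * k))) := by ring
        _ ≤ 2 * A * (q ^ (-(m : ℝ) ^ 2 + m) * q⁻¹ * w ((k : ℤ) - m)) := by gcongr
        _ = _ := by ring
  have hxpow : x ^ (ν - 1) ≤ q ^ (-(m : ℝ) * (ν - 1)) * q ^ (-|ν - 1|) := by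
    rw [hxeq, ← Real.rpow_mul hq0.le, ← Real.rpow_add hq0]
    apply Real.rpow_le_rpow_of_exponent_ge hq0 hq1.le
    have h1 : |ε * (ν - 1)| ≤ |ν - 1| := by
      rw [abs_mul, abs_of_pos he0]
      exact mul_le_of_le_one_left (abs_nonneg _) he1'.le
    have h2 := neg_abs_le (ε * (ν - 1))
    linarith
  have hexp : q ^ (-(m : ℝ) * (ν - 1)) * q ^ (-(m : ℝ) ^ 2 + m) =
      q ^ (-(m : ℝ) * ((m : ℝ) + ν - 2)) := by
    rw [← Real.rpow_add hq0]; congr 1; ring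
  have hxnn : 0 ≤ x ^ (ν - 1) := Real.rpow_nonneg hxpos.le _
  rw [hder, abs_mul, abs_mul, abs_of_nonneg hxnn]
  calc x ^ (ν - 1) * |c| * |∑' k : ℕ, 2 * (((k : ℝ) - m) * (a k * x ^ (2 * k)))|
      ≤ (q ^ (-(m : ℝ) * (ν - 1)) * q ^ (-|ν - 1|)) * |c| *
          (2 * A * (q ^ (-(m : ℝ) ^ 2 + m) * q⁻¹) * B) := by gcongr
    _ = q ^ (-|ν - 1|) * |c| * (2 * A * q⁻¹ * B) *
          (q ^ (-(m : ℝ) * (ν - 1)) * q ^ (-(m : ℝ) ^ 2 + m)) := by ring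
    _ = q ^ (-|ν - 1|) * |c| * (2 * A * q⁻¹ * B) *
          q ^ (-(m : ℝ) * ((m : ℝ) + ν - 2)) := by rw [hexp]
    _ ≤ _ := by
      gcongr
      linarith
end

section
/- There exists K ∈ ℕ such that for all integers k ≥ K, the 'shifted' zero q·j_{kν} lies strictly between the previous zero and q^{−k+1}: j_{k−1,ν} < q·j_{kν} < q^{−k+1}. -/
/-!
Write `J_ν(z;q²) = (nonvanishing factor) · F(z²)` with `F` an entire power series, `F 0 = 1`. With
`p = q²` and `b = q^{2ν}` the recursion of the coefficients is the second order `p`-difference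
equation `F(t) + (p t - 1 - b) F(p t) + b F(p² t) = 0`.

Iterating the associated Casoratian identity, differentiated along the diagonal, gives at every
positive zero `t` of `F` the inequality `F'(t) F(p t) ≤ -p F(p t)² < 0`
(`deriv_mul_neg_of_zero`); this uses `b p < 1`, i.e. `ν > -1`. So all positive zeros are simple,
and `F(p t)` has the sign that `F` has immediately to the left of `t`.

For large `k` the assumed bounds on `ε_k` give `j_{k-2} < q j_k < q^{1-k}`. If `q j_k ≤ j_{k-1}`,
then `F` would have the sign of `F(q² j_k²)` both on `[q² j_k², j_{k-1}²)` and on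
`(j_{k-1}², j_k²)`. So `F` would have a local extremum at its zero `j_{k-1}²`, contradicting
simplicity (`no_zero_between`).
-/

open Filter

/-! ### Zeros of solutions of the `p`-difference equation -/

section DifferenceEquation

variable {p b : ℝ} {F : ℝ → ℝ}

/-- Two consecutive zeros `t`, `p t` would propagate to all `p ^ n * t`, against `F 0 = 1`. -/
lemma ne_zero_of_zero (hp0 : 0 < p) (hp1 : p < 1) (hb : 0 < b) (hF : Continuous F)
    (hF0 : F 0 = 1)
    (heq : ∀ t, F t + (p * t - 1 - b) * F (p * t) + b * F (p * (p * t)) = 0)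
    {t : ℝ} (ht : F t = 0) : F (p * t) ≠ 0 := by
  intro h
  have key : ∀ n : ℕ, F (p ^ n * t) = 0 ∧ F (p ^ (n + 1) * t) = 0 := by
    intro n
    induction n with
    | zero => simpa using ⟨ht, h⟩
    | succ n ih =>
      refine ⟨ih.2, ?_⟩
      have e := heq (p ^ n * t)
      have e1 : p * (p ^ n * t) = p ^ (n + 1) * t := by ring
      have e2 : p * (p ^ (n + 1) * t) = p ^ (n + 1 + 1) * t := by ring
      rw [e1, e2, ih.1, ih.2] at e
      have : b * F (p ^ (n + 1 + 1) * t) = 0 := by linarith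
      exact (mul_eq_zero.1 this).resolve_left hb.ne'
  have hlim : Tendsto (fun n : ℕ => F (p ^ n * t)) atTop (nhds (F 0)) := by
    refine (hF.tendsto 0).comp ?_
    simpa using (tendsto_pow_atTop_nhds_zero_of_lt_one hp0.le hp1).mul_const t
  have h0 : (fun n : ℕ => F (p ^ n * t)) = fun _ => 0 := funext fun n => (key n).1
  rw [h0, hF0] at hlim
  exact zero_ne_one (tendsto_nhds_unique tendsto_const_nhds hlim)

/-- The derivative of `s ↦ F(s) F(p t) - F(p s) F(t)` at `s = t`, expressed by the iterated
Casoratian identity as `-∑ bⁿ pⁿ⁺¹ F(pⁿ⁺¹ t)²`, is at most the `n = 0` term `-p F(p t)²`. -/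
lemma casoratian_le (hp0 : 0 < p) (hp1 : p < 1) (hb : 0 < b) (hbp : b * p < 1)
    (hF : ContDiff ℝ 1 F)
    (heq : ∀ t, F t + (p * t - 1 - b) * F (p * t) + b * F (p * (p * t)) = 0) (t : ℝ) :
    deriv F t * F (p * t) - p * deriv F (p * t) * F t ≤ -(p * F (p * t) ^ 2) := by
  have hd : Differentiable ℝ F := hF.differentiable one_ne_zero
  have hdc : Continuous (deriv F) := hF.continuous_deriv le_rfl
  have heq' : ∀ t, deriv F t + p * F (p * t) + (p * t - 1 - b) * (p * deriv F (p * t))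
      + b * (p * (p * deriv F (p * (p * t)))) = 0 := by
    intro t
    have h1 : HasDerivAt (fun t => p * t) p t := by simpa using (hasDerivAt_id t).const_mul p
    have h2 : HasDerivAt (fun t => p * (p * t)) (p * p) t := h1.const_mul p
    have f1 : HasDerivAt (fun t => F (p * t)) (deriv F (p * t) * p) t :=
      (hd (p * t)).hasDerivAt.comp t h1
    have f2 : HasDerivAt (fun t => F (p * (p * t))) (deriv F (p * (p * t)) * (p * p)) t :=
      (hd (p * (p * t))).hasDerivAt.comp t h2
    have h := ((hd t).hasDerivAt.add (((h1.sub_const 1).sub_const b).mul f1)).add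
      (f2.const_mul b)
    have hz : HasDerivAt (fun _ : ℝ => (0 : ℝ)) 0 t := hasDerivAt_const t 0
    have := h.unique (hz.congr_of_eventuallyEq (Eventually.of_forall fun s => heq s))
    linarith
  set d : ℝ → ℝ := fun t => deriv F t * F (p * t) - p * deriv F (p * t) * F t with hdd
  have hstep : ∀ t, d t = -(p * F (p * t) ^ 2) + b * p * d (p * t) := by
    intro t
    have e : F t = -((p * t - 1 - b) * F (p * t)) - b * F (p * (p * t)) := by linarith [heq t]
    have e' : deriv F t = -(p * F (p * t)) - (p * t - 1 - b) * (p * deriv F (p * t))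
      - b * (p * (p * deriv F (p * (p * t)))) := by linarith [heq' t]
    simp only [hdd]
    rw [e, e']
    ring
  have hle : ∀ t, d t ≤ b * p * d (p * t) := fun t => by
    have := hstep t
    have : 0 ≤ p * F (p * t) ^ 2 := by positivity
    linarith
  have hiter : ∀ n : ℕ, d (p * t) ≤ (b * p) ^ n * d (p ^ n * (p * t)) := by
    intro n
    induction n with
    | zero => simp
    | succ n ih =>
      refine ih.trans ?_
      have h := mul_le_mul_of_nonneg_left (hle (p ^ n * (p * t)))
        (by positivity : 0 ≤ (b * p) ^ n)
      have e1 : p * (p ^ n * (p * t)) = p ^ (n + 1) * (p * t) := by ring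
      rw [e1] at h
      calc _ ≤ _ := h
        _ = _ := by ring
  have hdcont : Continuous d := by
    have := hF.continuous
    fun_prop
  have hlim : Tendsto (fun n : ℕ => (b * p) ^ n * d (p ^ n * (p * t))) atTop (nhds 0) := by
    have h1 : Tendsto (fun n : ℕ => d (p ^ n * (p * t))) atTop (nhds (d 0)) := by
      refine (hdcont.tendsto 0).comp ?_
      simpa using (tendsto_pow_atTop_nhds_zero_of_lt_one hp0.le hp1).mul_const (p * t)
    simpa using (tendsto_pow_atTop_nhds_zero_of_lt_one (by positivity) hbp).mul h1
  have hneg : d (p * t) ≤ 0 := ge_of_tendsto' hlim hiter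
  have := hstep t
  have : b * p * d (p * t) ≤ 0 := mul_nonpos_of_nonneg_of_nonpos (by positivity) hneg
  change d t ≤ _
  linarith

/-- Zeros are simple, and the sign of `F (p * t)` is that of `F` just to the left of `t`. -/
lemma deriv_mul_neg_of_zero (hp0 : 0 < p) (hp1 : p < 1) (hb : 0 < b) (hbp : b * p < 1)
    (hF : ContDiff ℝ 1 F) (hF0 : F 0 = 1)
    (heq : ∀ t, F t + (p * t - 1 - b) * F (p * t) + b * F (p * (p * t)) = 0)
    {t : ℝ} (ht : F t = 0) : deriv F t * F (p * t) < 0 := by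
  have h1 := casoratian_le hp0 hp1 hb hbp hF heq t
  have h2 := ne_zero_of_zero hp0 hp1 hb hF.continuous hF0 heq ht
  have : 0 < p * F (p * t) ^ 2 := by positivity
  rw [ht] at h1
  linarith

/-- Two consecutive zeros `A < T` cannot be such that `A` is the only zero of `F` in `[p T, T)`:
`F` would have the sign of `F (p * T)` on both sides of the simple zero `A`. -/
lemma no_zero_between (hp0 : 0 < p) (hp1 : p < 1) (hb : 0 < b) (hbp : b * p < 1)
    (hF : ContDiff ℝ 1 F) (hF0 : F 0 = 1)
    (heq : ∀ t, F t + (p * t - 1 - b) * F (p * t) + b * F (p * (p * t)) = 0)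
    {A T : ℝ} (hA : F A = 0) (hT : F T = 0) (hTA : p * T ≤ A) (hAT : A < T)
    (hleft : ∀ s, p * T ≤ s → s < A → F s ≠ 0) (hright : ∀ s, A < s → s < T → F s ≠ 0) :
    False := by
  have hXne := ne_zero_of_zero hp0 hp1 hb hF.continuous hF0 heq hT
  have hXA : p * T < A := lt_of_le_of_ne hTA fun h => hXne (h ▸ hA)
  have hTneg := deriv_mul_neg_of_zero hp0 hp1 hb hbp hF hF0 heq hT
  have hAneg := deriv_mul_neg_of_zero hp0 hp1 hb hbp hF hF0 heq hA
  set c := F (p * T) with hc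
  set h : ℝ → ℝ := fun s => F s * c with hh
  have hcont : Continuous h := hF.continuous.mul_const c
  have hder : ∀ s, HasDerivAt h (deriv F s * c) s := fun s =>
    ((hF.differentiable one_ne_zero) s).hasDerivAt.mul_const c
  have hzero : ∀ s, h s = 0 → F s = 0 := fun s hs => (mul_eq_zero.1 hs).resolve_right hXne
  have hposL : ∀ s, p * T ≤ s → s < A → 0 ≤ h s := by
    intro s h1 h2
    by_contra! hneg
    have h0 : 0 ≤ h (p * T) := mul_self_nonneg c
    obtain ⟨x, hx, hx0⟩ := intermediate_value_Icc' h1 hcont.continuousOn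
      (show (0 : ℝ) ∈ Set.Icc _ _ from ⟨hneg.le, h0⟩)
    exact hleft x hx.1 (hx.2.trans_lt h2) (hzero x hx0)
  have hposR : ∀ s, A < s → s < T → 0 ≤ h s := by
    intro s h1 h2
    by_contra! hneg
    have hev := eventually_nhdsWithin_sign_eq_of_deriv_neg (f := h) (x₀ := T)
      (by rw [(hder T).deriv]; exact hTneg) (by simp [hh, hT])
    have hev2 : ∀ᶠ x in nhdsWithin T (Set.Iio T), x ∈ Set.Ioo s T :=
      Ioo_mem_nhdsLT h2
    obtain ⟨y, hy1, hy2⟩ := ((hev.filter_mono nhdsWithin_le_nhds).and hev2).exists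
    rw [sign_pos (sub_pos.2 hy2.2)] at hy1
    have hypos : 0 < h y := sign_eq_one_iff.1 hy1
    obtain ⟨x, hx, hx0⟩ := intermediate_value_Icc hy2.1.le hcont.continuousOn
      (show (0 : ℝ) ∈ Set.Icc _ _ from ⟨hneg.le, hypos.le⟩)
    exact hright x (h1.trans_le hx.1) (hx.2.trans_lt hy2.2) (hzero x hx0)
  have hmin : IsLocalMin h A := by
    filter_upwards [Ioo_mem_nhds hXA hAT] with s hs
    have hA0 : h A = 0 := by simp [hh, hA]
    rw [hA0]
    rcases lt_trichotomy s A with hlt | rfl | hgt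
    · exact hposL s hs.1.le hlt
    · exact hA0.ge
    · exact hposR s hgt hs.2
  have hd0 := hmin.hasDerivAt_eq_zero (hder A)
  have : deriv F A = 0 := (mul_eq_zero.1 hd0).resolve_right hXne
  rw [this] at hAneg
  simp at hAneg

end DifferenceEquation

/-! ### The power series of the Hahn–Exton function -/

/-- The coefficients of the power series `F` in `t = z²` underlying `J_ν(z;q²)`, with
`c = q^{2(ν+1)}`. -/
noncomputable def besselCoeff (c q : ℝ) (k : ℕ) : ℝ :=
  (-1 : ℝ) ^ k * q ^ (k * (k + 1)) / (qPoch c (q ^ 2) k * qPoch (q ^ 2) (q ^ 2) k)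

/-- The entire function `F` with `J_ν(z;q²)` equal to `F(z²)` up to a nonvanishing factor. -/
noncomputable def besselF (c q t : ℝ) : ℝ := ∑' k : ℕ, besselCoeff c q k * t ^ k

section Series

variable {c q : ℝ}

lemma qPoch_pos (hc0 : 0 < c) (hc1 : c < 1) (hq0 : 0 < q) (hq1 : q < 1) (n : ℕ) :
    0 < qPoch c q n := by
  refine Finset.prod_pos fun j _ => ?_
  have h1 : q ^ j ≤ 1 := pow_le_one₀ hq0.le hq1.le
  nlinarith

lemma besselCoeff_succ (hc0 : 0 < c) (hc1 : c < 1) (hq0 : 0 < q) (hq1 : q < 1) (k : ℕ) :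
    besselCoeff c q (k + 1) * ((1 - c * (q ^ 2) ^ k) * (1 - (q ^ 2) ^ (k + 1))) =
      -((q ^ 2) ^ (k + 1) * besselCoeff c q k) := by
  have hp0 : 0 < q ^ 2 := by positivity
  have hp1 : q ^ 2 < 1 := by nlinarith
  have h1 := (qPoch_pos hc0 hc1 hp0 hp1 k).ne'
  have h2 := (qPoch_pos hp0 hp1 hp0 hp1 k).ne'
  have h3 := (qPoch_pos hc0 hc1 hp0 hp1 (k + 1)).ne'
  have h4 := (qPoch_pos hp0 hp1 hp0 hp1 (k + 1)).ne'
  have e1 : qPoch c (q ^ 2) (k + 1) = qPoch c (q ^ 2) k * (1 - c * (q ^ 2) ^ k) :=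
    Finset.prod_range_succ _ _
  have e2 : qPoch (q ^ 2) (q ^ 2) (k + 1) =
      qPoch (q ^ 2) (q ^ 2) k * (1 - (q ^ 2) ^ (k + 1)) := by
    rw [pow_succ' (q ^ 2) k]
    exact Finset.prod_range_succ _ _
  rw [e1] at h3
  rw [e2] at h4
  have h5 := right_ne_zero_of_mul h3
  have h6 := right_ne_zero_of_mul h4
  have e3 : q ^ ((k + 1) * (k + 1 + 1)) = q ^ (k * (k + 1)) * (q ^ 2) ^ (k + 1) := by
    rw [← pow_mul, ← pow_add]
    congr 1
    ring
  unfold besselCoeff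
  rw [e1, e2, e3]
  generalize (1 - c * (q ^ 2) ^ k) = x at *
  generalize qPoch c (q ^ 2) k = P1 at *
  generalize qPoch (q ^ 2) (q ^ 2) k = P2 at *
  generalize (q ^ 2) ^ (k + 1) = y at *
  field_simp
  ring

lemma besselCoeff_ne_zero (hc0 : 0 < c) (hc1 : c < 1) (hq0 : 0 < q) (hq1 : q < 1) (k : ℕ) :
    besselCoeff c q k ≠ 0 := by
  have hp0 : 0 < q ^ 2 := by positivity
  have hp1 : q ^ 2 < 1 := by nlinarith
  have h1 := (qPoch_pos hc0 hc1 hp0 hp1 k).ne'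
  have h2 := (qPoch_pos hp0 hp1 hp0 hp1 k).ne'
  have h3 : ((-1 : ℝ)) ^ k ≠ 0 := pow_ne_zero _ (by norm_num)
  unfold besselCoeff
  positivity

lemma besselF_radius (hc0 : 0 < c) (hc1 : c < 1) (hq0 : 0 < q) (hq1 : q < 1) :
    (FormalMultilinearSeries.ofScalars ℝ (besselCoeff c q)).radius = ⊤ := by
  have hp0 : 0 < q ^ 2 := by positivity
  have hp1 : q ^ 2 < 1 := by nlinarith
  have hne := besselCoeff_ne_zero hc0 hc1 hq0 hq1
  refine FormalMultilinearSeries.ofScalars_radius_eq_top_of_tendsto _ _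
    (Eventually.of_forall hne) ?_
  have hlim := tendsto_pow_atTop_nhds_zero_of_lt_one hp0.le hp1
  have hlim' := (tendsto_add_atTop_iff_nat 1).2 hlim
  have key : Tendsto (fun k : ℕ => (q ^ 2) ^ (k + 1) /
      ((1 - c * (q ^ 2) ^ k) * (1 - (q ^ 2) ^ (k + 1)))) atTop (nhds 0) := by
    have hden : Tendsto (fun k : ℕ => (1 - c * (q ^ 2) ^ k) * (1 - (q ^ 2) ^ (k + 1))) atTop
        (nhds ((1 - c * 0) * (1 - 0))) :=
      ((hlim.const_mul c).const_sub 1).mul (hlim'.const_sub 1)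
    have h := hlim'.div hden (by norm_num)
    rw [zero_div] at h
    exact h
  refine key.congr fun k => ?_
  have h1 : 0 < 1 - c * (q ^ 2) ^ k := by
    have : (q ^ 2) ^ k ≤ 1 := pow_le_one₀ hp0.le hp1.le
    nlinarith
  have h2 : 0 < 1 - (q ^ 2) ^ (k + 1) := by
    have : (q ^ 2) ^ (k + 1) < 1 := pow_lt_one₀ hp0.le hp1 (by simp)
    linarith
  have hs := besselCoeff_succ hc0 hc1 hq0 hq1 k
  have hs' : ‖besselCoeff c q (k + 1)‖ * ((1 - c * (q ^ 2) ^ k) * (1 - (q ^ 2) ^ (k + 1))) =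
      (q ^ 2) ^ (k + 1) * ‖besselCoeff c q k‖ := by
    have := congrArg norm hs
    rwa [norm_mul, norm_neg, norm_mul ((q ^ 2) ^ (k + 1)), Real.norm_of_nonneg (mul_pos h1 h2).le,
      Real.norm_of_nonneg (by positivity : 0 ≤ (q ^ 2) ^ (k + 1))] at this
  have hn : 0 < ‖besselCoeff c q k‖ := norm_pos_iff.2 (hne k)
  rw [Nat.succ_eq_add_one, div_eq_div_iff (by positivity) hn.ne']
  linarith

lemma besselF_hasFPowerSeries (hc0 : 0 < c) (hc1 : c < 1) (hq0 : 0 < q) (hq1 : q < 1) :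
    HasFPowerSeriesOnBall (besselF c q)
      (FormalMultilinearSeries.ofScalars ℝ (besselCoeff c q)) 0 ⊤ := by
  have hr := besselF_radius hc0 hc1 hq0 hq1
  have h := (FormalMultilinearSeries.ofScalars ℝ (besselCoeff c q)).hasFPowerSeriesOnBall
    (by rw [hr]; exact ENNReal.zero_lt_top)
  rw [hr] at h
  have e : besselF c q = (FormalMultilinearSeries.ofScalars ℝ (besselCoeff c q)).sum := by
    funext t
    exact (FormalMultilinearSeries.ofScalars_sum_eq (besselCoeff c q) t).symm
  rw [e]
  exact h

lemma besselF_hasSum (hc0 : 0 < c) (hc1 : c < 1) (hq0 : 0 < q) (hq1 : q < 1) (t : ℝ) :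
    HasSum (fun k : ℕ => besselCoeff c q k * t ^ k) (besselF c q t) := by
  have h := (besselF_hasFPowerSeries hc0 hc1 hq0 hq1).hasSum (y := t) (by simp)
  simpa [FormalMultilinearSeries.ofScalars_apply_eq, mul_comm] using h

lemma besselF_contDiff (hc0 : 0 < c) (hc1 : c < 1) (hq0 : 0 < q) (hq1 : q < 1) :
    ContDiff ℝ 1 (besselF c q) := by
  have h := (besselF_hasFPowerSeries hc0 hc1 hq0 hq1).analyticOnNhd
  refine contDiff_iff_contDiffAt.2 fun t => (h t (by simp)).contDiffAt

lemma besselF_zero : besselF c q 0 = 1 := by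
  unfold besselF
  rw [tsum_eq_single 0]
  · simp [besselCoeff, qPoch]
  · intro k hk
    simp [hk]

lemma besselF_eq (hc0 : 0 < c) (hc1 : c < 1) (hq0 : 0 < q) (hq1 : q < 1) (t : ℝ) :
    besselF c q t + (q ^ 2 * t - 1 - c / q ^ 2) * besselF c q (q ^ 2 * t)
      + c / q ^ 2 * besselF c q (q ^ 2 * (q ^ 2 * t)) = 0 := by
  have H := besselF_hasSum hc0 hc1 hq0 hq1
  have hL := ((H t).add ((H (q ^ 2 * t)).mul_left (-1 - c / q ^ 2))).add
    ((H (q ^ 2 * (q ^ 2 * t))).mul_left (c / q ^ 2))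
  -- The constant term cancels, which makes room for the index shift in `t * F (q² t)`.
  have hL' := (hasSum_nat_add_iff' 1).2 hL
  have hR := ((H (q ^ 2 * t)).mul_left (-(q ^ 2 * t)))
  have := hL'.unique (hR.congr_fun ?_)
  · simp only [Finset.range_one, Finset.sum_singleton, pow_zero] at this
    linarith
  · intro k
    have hs := besselCoeff_succ hc0 hc1 hq0 hq1 k
    have e : besselCoeff c q (k + 1) * t ^ (k + 1)
        + (-1 - c / q ^ 2) * (besselCoeff c q (k + 1) * (q ^ 2 * t) ^ (k + 1))
        + c / q ^ 2 * (besselCoeff c q (k + 1) * (q ^ 2 * (q ^ 2 * t)) ^ (k + 1)) =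
        besselCoeff c q (k + 1) * ((1 - c * (q ^ 2) ^ k) * (1 - (q ^ 2) ^ (k + 1)))
          * t ^ (k + 1) := by
      have hp : q ^ 2 ≠ 0 := by positivity
      simp only [mul_pow _ _ (k + 1)]
      generalize q ^ 2 = p at *
      have : c / p * p ^ (k + 1) = c * p ^ k := by
        rw [pow_succ]
        field_simp
      linear_combination (besselCoeff c q (k + 1) * t ^ (k + 1) * (p ^ (k + 1) - 1)) * this
    rw [e, hs]
    ring

end Series

lemma qBessel_eq (ν q z : ℝ) : qBessel ν q z =
    z ^ ν * (qPochInf (q ^ (2 * (ν + 1))) (q ^ 2) / qPochInf (q ^ 2) (q ^ 2)) *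
      besselF (q ^ (2 * (ν + 1))) q (z ^ 2) := by
  unfold qBessel besselF besselCoeff
  congr 1
  refine tsum_congr fun k => ?_
  rw [pow_mul z 2 k]
  ring

lemma qPochInf_ne_zero {c q : ℝ} (hc0 : 0 < c) (hc1 : c < 1) (hq0 : 0 < q) (hq1 : q < 1) :
    qPochInf c q ≠ 0 := by
  have h := tprod_one_add_ne_zero_of_summable (f := fun n : ℕ => -(c * q ^ n)) ?_ ?_
  · simpa [qPochInf, sub_eq_add_neg] using h
  · intro n
    have h1 : q ^ n ≤ 1 := pow_le_one₀ hq0.le hq1.le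
    have : 0 < 1 + -(c * q ^ n) := by nlinarith
    exact this.ne'
  · simpa [abs_of_pos hc0, abs_of_pos hq0] using
      (summable_geometric_of_lt_one hq0.le hq1).mul_left c

lemma qBessel_eq_zero_iff {ν q z : ℝ} (hq0 : 0 < q) (hq1 : q < 1) (hν : -1 < ν) (hz : 0 < z) :
    qBessel ν q z = 0 ↔ besselF (q ^ (2 * (ν + 1))) q (z ^ 2) = 0 := by
  have hc0 : 0 < q ^ (2 * (ν + 1)) := by positivity
  have hc1 : q ^ (2 * (ν + 1)) < 1 := Real.rpow_lt_one hq0.le hq1 (by linarith)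
  have hp0 : 0 < q ^ 2 := by positivity
  have hp1 : q ^ 2 < 1 := by nlinarith
  have h1 := qPochInf_ne_zero hc0 hc1 hp0 hp1
  have h2 := qPochInf_ne_zero hp0 hp1 hp0 hp1
  have h3 : z ^ ν ≠ 0 := (Real.rpow_pos_of_pos hz ν).ne'
  rw [qBessel_eq]
  simp [h1, h2, h3]

/-! ### Location of the shifted zeros -/

lemma tendsto_alpha (q ν : ℝ) (hq0 : 0 < q) (hq1 : q < 1) :
    Tendsto (fun k : ℕ => Real.log (1 - q ^ (2 * ((k : ℝ) + ν)) / (1 - q ^ (2 * (k : ℝ)))) /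
      (2 * Real.log q)) atTop (nhds 0) := by
  have hp0 : 0 < q ^ 2 := by positivity
  have hp1 : q ^ 2 < 1 := by nlinarith
  have hlim := tendsto_pow_atTop_nhds_zero_of_lt_one hp0.le hp1
  have e1 : ∀ k : ℕ, q ^ (2 * (k : ℝ)) = (q ^ 2) ^ k := fun k => by
    rw [← pow_mul, ← Real.rpow_natCast]
    push_cast
    rfl
  have e2 : ∀ k : ℕ, q ^ (2 * ((k : ℝ) + ν)) = (q ^ 2) ^ k * q ^ (2 * ν) := fun k => by
    rw [mul_add, Real.rpow_add hq0, e1]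
  simp only [e1, e2]
  have h1 : Tendsto (fun k : ℕ => 1 - (q ^ 2) ^ k * q ^ (2 * ν) / (1 - (q ^ 2) ^ k)) atTop
      (nhds (1 - 0 * q ^ (2 * ν) / (1 - 0))) :=
    ((hlim.mul_const _).div (hlim.const_sub 1) (by norm_num)).const_sub 1
  have h2 := (h1.log (by norm_num)).div_const (2 * Real.log q)
  simpa using h2

theorem stmt5 (q ν : ℝ) (hq0 : 0 < q) (hq1 : q < 1) (hν : -1 < ν)
    (j : ℕ → ℝ)
    (hjpos : ∀ k, 1 ≤ k → 0 < j k)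
    (hjzero : ∀ k, 1 ≤ k → qBessel ν q (j k) = 0)
    (hjmono : ∀ k, 1 ≤ k → j k < j (k + 1))
    (hjall : ∀ x, 0 < x → qBessel ν q x = 0 → ∃ k, 1 ≤ k ∧ x = j k)
    (hε : ∃ K : ℕ, ∀ k, K ≤ k →
      0 < (k : ℝ) + Real.log (j k) / Real.log q ∧
      (k : ℝ) + Real.log (j k) / Real.log q <
        Real.log (1 - q ^ (2 * ((k : ℝ) + ν)) / (1 - q ^ (2 * (k : ℝ)))) / (2 * Real.log q))
    :
    ∃ K : ℕ, ∀ k, K ≤ k →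
      j (k - 1) < q * j k ∧ q * j k < q ^ (-(k : ℝ) + 1) := by
  obtain ⟨K₁, hK₁⟩ := hε
  obtain ⟨K₂, hK₂⟩ := eventually_atTop.1
    ((tendsto_alpha q ν hq0 hq1).eventually (gt_mem_nhds zero_lt_one))
  have hlog : Real.log q < 0 := Real.log_neg hq0 hq1
  have hupper : ∀ k, 1 ≤ k → K₁ ≤ k → j k < q ^ (-(k : ℝ)) := by
    intro k h1 hk
    have h := (hK₁ k hk).1
    have h2 : -(k : ℝ) < Real.log (j k) / Real.log q := by linarith
    rw [lt_div_iff_of_neg hlog] at h2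
    rwa [← Real.log_lt_log_iff (hjpos k h1) (by positivity), Real.log_rpow hq0]
  have hlower : ∀ k, 1 ≤ k → K₁ ≤ k → K₂ ≤ k → q ^ (-(k : ℝ) + 1) < j k := by
    intro k h1 hk hk'
    have h := (hK₁ k hk).2.trans (hK₂ k hk')
    have h2 : Real.log (j k) / Real.log q < -(k : ℝ) + 1 := by linarith
    rw [div_lt_iff_of_neg hlog] at h2
    rwa [← Real.log_lt_log_iff (by positivity) (hjpos k h1), Real.log_rpow hq0]
  have hmono : StrictMono fun n => j (n + 1) :=
    strictMono_nat_of_lt_succ fun n => hjmono (n + 1) (by omega)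
  have hlt : ∀ m n, 1 ≤ m → 1 ≤ n → j m < j n → m < n := by
    intro m n hm hn h
    obtain ⟨m, rfl⟩ := Nat.exists_eq_add_of_le' hm
    obtain ⟨n, rfl⟩ := Nat.exists_eq_add_of_le' hn
    have := hmono.lt_iff_lt.1 h
    omega
  have hp0 : 0 < q ^ 2 := by positivity
  have hp1 : q ^ 2 < 1 := by nlinarith
  have hc0 : 0 < q ^ (2 * (ν + 1)) := by positivity
  have hc1 : q ^ (2 * (ν + 1)) < 1 := Real.rpow_lt_one hq0.le hq1 (by linarith)
  set c := q ^ (2 * (ν + 1)) with hc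
  -- A zero of `F` between two squared zeros `j m ^ 2`, `j n ^ 2` is itself some `j i ^ 2`.
  have hgap : ∀ m n s, 1 ≤ m → 1 ≤ n → j m ^ 2 < s → s < j n ^ 2 → besselF c q s = 0 →
      ∃ i, m < i ∧ i < n := by
    intro m n s hm hn h1 h2 h0
    have hs : 0 < s := lt_of_le_of_lt (sq_nonneg _) h1
    have hsq : Real.sqrt s ^ 2 = s := Real.sq_sqrt hs.le
    have hsp : 0 < Real.sqrt s := Real.sqrt_pos.2 hs
    obtain ⟨i, hi, hie⟩ := hjall (Real.sqrt s) hsp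
      ((qBessel_eq_zero_iff hq0 hq1 hν hsp).2 (by rw [hsq]; exact h0))
    rw [← hsq, hie] at h1 h2
    exact ⟨i, hlt m i hm hi (lt_of_pow_lt_pow_left₀ 2 (hjpos i hi).le h1),
      hlt i n hi hn (lt_of_pow_lt_pow_left₀ 2 (hjpos n hn).le h2)⟩
  refine ⟨K₁ + K₂ + 3, fun k hk => ?_⟩
  have hqk : q * q ^ (-(k : ℝ)) = q ^ (-(k : ℝ) + 1) := by
    rw [Real.rpow_add hq0, Real.rpow_one, mul_comm]
  refine ⟨?_, hqk ▸ mul_lt_mul_of_pos_left (hupper k (by omega) (by omega)) hq0⟩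
  by_contra! hcon
  obtain ⟨n, rfl⟩ : ∃ n, k = n + 2 := ⟨k - 2, by omega⟩
  have hk1 : n + 2 - 1 = n + 1 := by omega
  rw [hk1] at hcon
  have hz : ∀ m, 1 ≤ m → besselF c q (j m ^ 2) = 0 := fun m hm =>
    (qBessel_eq_zero_iff hq0 hq1 hν (hjpos m hm)).1 (hjzero m hm)
  have hprev : j n < q * j (n + 2) := by
    have h1 := hupper n (by omega) (by omega)
    have h2 := mul_lt_mul_of_pos_left (hlower (n + 2) (by omega) (by omega) (by omega)) hq0
    have e : q * q ^ (-((n + 2 : ℕ) : ℝ) + 1) = q ^ (-(n : ℝ)) := by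
      rw [mul_comm, ← Real.rpow_add_one hq0.ne']
      congr 1
      push_cast
      ring
    rw [e] at h2
    exact h1.trans h2
  have hjn := hjpos n (by omega)
  have hjn1 := hjpos (n + 1) (by omega)
  have hjn2 := hjpos (n + 2) (by omega)
  refine no_zero_between hp0 hp1 (div_pos hc0 hp0)
    (by rw [div_mul_cancel₀ _ hp0.ne']; exact hc1)
    (besselF_contDiff hc0 hc1 hq0 hq1) besselF_zero (besselF_eq hc0 hc1 hq0 hq1)
    (hz (n + 1) (by omega)) (hz (n + 2) (by omega)) ?_ ?_ ?_ ?_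
  · rw [← mul_pow]
    gcongr
  · have := hjmono (n + 1) (by omega)
    gcongr
  · intro s h1 h2 h0
    have h3 : j n ^ 2 < s := by
      refine lt_of_lt_of_le ?_ h1
      rw [← mul_pow]
      gcongr
    obtain ⟨i, hi1, hi2⟩ := hgap n (n + 1) s (by omega) (by omega) h3 h2 h0
    omega
  · intro s h1 h2 h0
    obtain ⟨i, hi1, hi2⟩ := hgap (n + 1) (n + 2) s (by omega) (by omega) h1 h2 h0
    omega
end

section
/- The sequence {ε_k^{(ν)}}_k is eventually strictly decreasing: there exists k₀ ∈ ℕ such that ε_{k+1}^{(ν)} < ε_k^{(ν)} for all integers k ≥ k₀. -/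
/-!
Write `G` for the power series factor of `J_ν(·;q²)`, so that the positive zeros of `J_ν` are those
of `G`. The coefficients of `G` give the `q`-difference equation
`G z + (q²z² - 1 - q^{2ν}) G (q z) + q^{2ν} G (q² z) = 0` (`qSeries_recurrence`).

Fix a large `k`, put `e = ε_{k+1}` and `u m = G (q^{e-m})`. Then `u` satisfies a three-term
recurrence whose middle coefficient is large for `m ≥ m₀`, with `m₀` independent of `k`, and
`u (k+1) = 0`. Running the recurrence downwards from `k+1` shows that `u` alternates in sign and
that `|u|` is nonincreasing on `m₀ ≤ m ≤ k` (`alternating_of_recurrence`).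

Since `0 < ε_k < α_k → 0`, a large `k` has `e < ε_{m₀}`. The inequality `e < ε_m` then propagates
from `m₀` up to `k`: if `e < ε_m` but `e ≥ ε_{m+1}`, then `q^{e-m}` and `q^{e-(m+1)}` both lie in
`(j_m, j_{m+1}]`, and the sign change of `G` between them produces a zero strictly between two
consecutive zeros. At `m = k` this is the claim.
-/

open Filter

/-! ### The power series factor and its q-difference equation -/

/-- The coefficient of `z^{2k}` in the power series factor of `qBessel ν q z`. -/
noncomputable def qCoeff (ν q : ℝ) (k : ℕ) : ℝ :=
  (-1 : ℝ) ^ k * q ^ (k * (k + 1)) /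
    (qPoch (q ^ (2 * (ν + 1))) (q ^ 2) k * qPoch (q ^ 2) (q ^ 2) k)

/-- The power series factor of the Hahn–Exton `q`-Bessel function. -/
noncomputable def qSeries (ν q z : ℝ) : ℝ := ∑' k : ℕ, qCoeff ν q k * z ^ (2 * k)

lemma qBessel_eq_mul_qSeries (ν q z : ℝ) :
    qBessel ν q z = z ^ ν * (qPochInf (q ^ (2 * (ν + 1))) (q ^ 2) / qPochInf (q ^ 2) (q ^ 2)) *
      qSeries ν q z := by
  unfold qBessel qSeries qCoeff
  congr 1
  refine tsum_congr fun k => ?_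
  ring

lemma qPoch_pos_s6 {a p : ℝ} (ha1 : a < 1) (hp0 : 0 < p) (hp1 : p < 1)
    (n : ℕ) : 0 < qPoch a p n := by
  refine Finset.prod_pos fun i _ => ?_
  have h1 : p ^ i ≤ 1 := pow_le_one₀ hp0.le hp1.le
  have h2 : 0 < p ^ i := pow_pos hp0 i
  nlinarith

lemma qPoch_succ (a p : ℝ) (n : ℕ) : qPoch a p (n + 1) = qPoch a p n * (1 - a * p ^ n) := by
  simp [qPoch, Finset.prod_range_succ]

section
variable {q ν : ℝ}

lemma order_param_lt_one (hq0 : 0 < q) (hq1 : q < 1) (hν : -1 < ν) : q ^ (2 * (ν + 1)) < 1 :=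
  Real.rpow_lt_one hq0.le hq1 (by linarith)

lemma order_param_eq (hq0 : 0 < q) : q ^ (2 * (ν + 1)) = q ^ (2 * ν) * q ^ 2 := by
  rw [show 2 * (ν + 1) = 2 * ν + (2 : ℕ) by push_cast; ring, Real.rpow_add hq0, Real.rpow_natCast]

lemma qCoeff_ne_zero (hq0 : 0 < q) (hq1 : q < 1) (hν : -1 < ν) (k : ℕ) : qCoeff ν q k ≠ 0 := by
  have hp0 : 0 < q ^ 2 := by positivity
  have hp1 : q ^ 2 < 1 := by nlinarith
  have h1 := qPoch_pos_s6 (order_param_lt_one hq0 hq1 hν) hp0 hp1 k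
  have h2 := qPoch_pos_s6 hp1 hp0 hp1 k
  unfold qCoeff
  have h3 : (-1 : ℝ) ^ k ≠ 0 := pow_ne_zero _ (by norm_num)
  positivity

lemma qCoeff_succ (hq0 : 0 < q) (hq1 : q < 1) (hν : -1 < ν) (k : ℕ) :
    qCoeff ν q (k + 1) * ((1 - q ^ (2 * (ν + 1)) * (q ^ 2) ^ k) * (1 - q ^ 2 * (q ^ 2) ^ k)) =
      -(q ^ 2 * (q ^ 2) ^ k) * qCoeff ν q k := by
  have hp0 : 0 < q ^ 2 := by positivity
  have hp1 : q ^ 2 < 1 := by nlinarith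
  have ha := order_param_lt_one hq0 hq1 hν
  have ha0 : 0 < q ^ (2 * (ν + 1)) := Real.rpow_pos_of_pos hq0 _
  have h1 := qPoch_pos_s6 ha hp0 hp1 k
  have h2 := qPoch_pos_s6 hp1 hp0 hp1 k
  have h3 := qPoch_pos_s6 ha hp0 hp1 (k + 1)
  have h4 := qPoch_pos_s6 hp1 hp0 hp1 (k + 1)
  unfold qCoeff
  rw [qPoch_succ] at h3 h4 ⊢
  rw [qPoch_succ]
  generalize q ^ (2 * (ν + 1)) = a at *
  generalize qPoch a (q ^ 2) k = A at *
  generalize qPoch (q ^ 2) (q ^ 2) k = B at *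
  have h5 := (pos_of_mul_pos_right h3 h1.le).ne'
  have h6 := (pos_of_mul_pos_right h4 h2.le).ne'
  rw [show (k + 1) * (k + 1 + 1) = k * (k + 1) + (2 * k + 2) by ring]
  rw [div_mul_eq_mul_div, mul_div_assoc', div_eq_div_iff (by positivity) (by positivity)]
  rw [pow_add q, pow_succ (-1 : ℝ)]
  ring

lemma qSeries_summable (hq0 : 0 < q) (hq1 : q < 1) (hν : -1 < ν) (z : ℝ) :
    Summable fun k => qCoeff ν q k * z ^ (2 * k) := by
  rcases eq_or_ne z 0 with rfl | hz
  · refine summable_of_ne_finset_zero (s := {0}) fun k hk => ?_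
    have : k ≠ 0 := by simpa using hk
    simp [this]
  have hp0 : 0 < q ^ 2 := by positivity
  have hp1 : q ^ 2 < 1 := by nlinarith
  have ha := order_param_lt_one hq0 hq1 hν
  have ha0 : 0 < q ^ (2 * (ν + 1)) := Real.rpow_pos_of_pos hq0 _
  refine summable_of_ratio_test_tendsto_lt_one (l := 0) one_pos
    (Eventually.of_forall fun k => mul_ne_zero (qCoeff_ne_zero hq0 hq1 hν k) (pow_ne_zero _ hz)) ?_
  have hpow := tendsto_pow_atTop_nhds_zero_of_lt_one hp0.le hp1
  have hlim : Tendsto (fun k : ℕ => q ^ 2 * (q ^ 2) ^ k * z ^ 2 /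
      ((1 - q ^ (2 * (ν + 1)) * (q ^ 2) ^ k) * (1 - q ^ 2 * (q ^ 2) ^ k))) atTop (nhds 0) := by
    have h := ((hpow.const_mul (q ^ 2)).mul_const (z ^ 2)).div
      (((hpow.const_mul (q ^ (2 * (ν + 1)))).const_sub 1).mul
        ((hpow.const_mul (q ^ 2)).const_sub 1)) (by simp)
    simpa [Pi.div_def] using h
  refine hlim.congr fun k => ?_
  have hk0 : 0 < (q ^ 2) ^ k := by positivity
  have hk1 : (q ^ 2) ^ k ≤ 1 := pow_le_one₀ hp0.le hp1.le
  have h1 : 0 < 1 - q ^ (2 * (ν + 1)) * (q ^ 2) ^ k := by nlinarith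
  have h2 : 0 < 1 - q ^ 2 * (q ^ 2) ^ k := by nlinarith
  have hc := qCoeff_ne_zero hq0 hq1 hν k
  have hs := qCoeff_succ hq0 hq1 hν k
  have hc' : qCoeff ν q (k + 1) = -(q ^ 2 * (q ^ 2) ^ k) * qCoeff ν q k /
      ((1 - q ^ (2 * (ν + 1)) * (q ^ 2) ^ k) * (1 - q ^ 2 * (q ^ 2) ^ k)) := by
    rw [eq_div_iff (by positivity), hs]
  have hzz : qCoeff ν q k * z ^ (2 * k) ≠ 0 := mul_ne_zero hc (pow_ne_zero _ hz)
  rw [← norm_div]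
  have : qCoeff ν q (k + 1) * z ^ (2 * (k + 1)) / (qCoeff ν q k * z ^ (2 * k)) =
      -(q ^ 2 * (q ^ 2) ^ k * z ^ 2 /
      ((1 - q ^ (2 * (ν + 1)) * (q ^ 2) ^ k) * (1 - q ^ 2 * (q ^ 2) ^ k))) := by
    rw [div_eq_iff hzz, hc', show z ^ (2 * (k + 1)) = z ^ (2 * k) * z ^ 2 by ring]
    ring
  rw [this, norm_neg, Real.norm_of_nonneg (by positivity)]

lemma qSeries_continuousOn (hq0 : 0 < q) (hq1 : q < 1) (hν : -1 < ν) (R : ℝ) :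
    ContinuousOn (qSeries ν q) (Set.Icc 0 R) := by
  refine continuousOn_tsum (u := fun k => ‖qCoeff ν q k * R ^ (2 * k)‖) (fun k => by fun_prop)
    (qSeries_summable hq0 hq1 hν R).norm fun k x hx => ?_
  rw [norm_mul, norm_mul, norm_pow, norm_pow]
  gcongr
  rw [Real.norm_of_nonneg hx.1, Real.norm_of_nonneg (hx.1.trans hx.2)]
  exact hx.2

/-- The second-order `q`-difference equation satisfied by the power series factor. -/
lemma qSeries_recurrence (hq0 : 0 < q) (hq1 : q < 1) (hν : -1 < ν) (z : ℝ) :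
    qSeries ν q z + (q ^ 2 * z ^ 2 - 1 - q ^ (2 * ν)) * qSeries ν q (q * z) +
      q ^ (2 * ν) * qSeries ν q (q ^ 2 * z) = 0 := by
  have h0 := (qSeries_summable hq0 hq1 hν z).hasSum
  have h1 := (qSeries_summable hq0 hq1 hν (q * z)).hasSum
  have h2 := (qSeries_summable hq0 hq1 hν (q ^ 2 * z)).hasSum
  have h := (h0.add (h1.mul_left (-1 - q ^ (2 * ν)))).add (h2.mul_left (q ^ (2 * ν)))
  rw [← hasSum_nat_add_iff' 1] at h
  have h' := h1.mul_left (-(q ^ 2 * z ^ 2))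
  have e := h.unique (h'.congr_fun fun k => ?_)
  · simp only [Finset.range_one, Finset.sum_singleton, mul_zero, pow_zero] at e
    simp only [qSeries]
    linarith
  · have hs := qCoeff_succ hq0 hq1 hν k
    rw [order_param_eq hq0] at hs
    have hz : z ^ (2 * (k + 1)) = z ^ (2 * k) * z ^ 2 := by ring
    have e1 : (q * z) ^ (2 * (k + 1)) = (q ^ 2 * (q ^ 2) ^ k) * (z ^ (2 * k) * z ^ 2) := by ring
    have e2 : (q ^ 2 * z) ^ (2 * (k + 1)) =
        (q ^ 2 * (q ^ 2) ^ k) ^ 2 * (z ^ (2 * k) * z ^ 2) := by ring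
    have e3 : (q * z) ^ (2 * k) = (q ^ 2) ^ k * z ^ (2 * k) := by ring
    rw [hz, e1, e2, e3]
    linear_combination (z ^ (2 * k) * z ^ 2) * hs

end

/-! ### Alternating solutions and the limit of the upper bounds -/

/-- A backward solution, started from `u (k+1) = 0`, of a three-term recurrence with dominant middle
coefficient alternates in sign with nonincreasing absolute value; both facts are encoded in the
inequality `u m * u (m+1) ≤ -(u (m+1))²`. -/
lemma alternating_of_recurrence {u w : ℕ → ℝ} {b : ℝ} (hb : 0 < b) {m₀ k : ℕ}
    (hw : ∀ m, m₀ ≤ m → 2 + 2 * b ≤ w m)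
    (hrec : ∀ m, u (m + 2) + (w (m + 1) - 1 - b) * u (m + 1) + b * u m = 0)
    (hk : u (k + 1) = 0) (m : ℕ) (hm₀ : m₀ ≤ m) (hmk : m ≤ k) :
    u m * u (m + 1) ≤ -(u (m + 1)) ^ 2 := by
  induction hmk using Nat.decreasingInduction with
  | self => simp [hk]
  | of_succ m hmk ih =>
    have h := ih (by omega)
    have hr := hrec m
    have hW := hw (m + 1) (by omega)
    simp only [add_assoc, Nat.reduceAdd] at h
    set W := w (m + 1)
    generalize u (m + 2) = u2 at *
    generalize u (m + 1) = u1 at *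
    generalize u m = u0 at *
    -- `u1 u2 ≤ -u2²` gives `|u2| ≤ |u1|`, hence `u1² + u1 u2 ≥ 0`
    have h3 : 0 ≤ u1 ^ 2 + u1 * u2 := by nlinarith [sq_nonneg (u1 + u2)]
    have h4 : b * (u0 * u1 + u1 ^ 2) = -((W - 1 - 2 * b) * u1 ^ 2 + u1 * u2) := by
      linear_combination u1 * hr
    have h5 : u1 ^ 2 ≤ (W - 1 - 2 * b) * u1 ^ 2 := by nlinarith [sq_nonneg u1]
    have h6 : b * (u0 * u1 + u1 ^ 2) ≤ 0 := by rw [h4]; linarith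
    by_contra hcon
    push Not at hcon
    have : 0 < b * (u0 * u1 + u1 ^ 2) := mul_pos hb (by linarith)
    linarith

lemma alpha_tendsto_zero {q : ℝ} (ν : ℝ) (hq0 : 0 < q) (hq1 : q < 1) :
    Tendsto (fun k : ℕ => Real.log (1 - q ^ (2 * ((k : ℝ) + ν)) / (1 - q ^ (2 * (k : ℝ)))) /
      (2 * Real.log q)) atTop (nhds 0) := by
  have hpow : Tendsto (fun k : ℕ => q ^ (2 * (k : ℝ))) atTop (nhds 0) := by
    have := tendsto_pow_atTop_nhds_zero_of_lt_one (r := q ^ 2) (by positivity) (by nlinarith)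
    refine this.congr fun k => ?_
    rw [← pow_mul, ← Real.rpow_natCast]
    push_cast
    rfl
  have hpow' : Tendsto (fun k : ℕ => q ^ (2 * ((k : ℝ) + ν))) atTop (nhds 0) := by
    have := hpow.mul_const (q ^ (2 * ν))
    rw [zero_mul] at this
    refine this.congr fun k => ?_
    rw [← Real.rpow_add hq0]
    ring_nf
  have h1 : Tendsto (fun k : ℕ => 1 - q ^ (2 * ((k : ℝ) + ν)) / (1 - q ^ (2 * (k : ℝ)))) atTop
      (nhds 1) := by
    have := (hpow'.div (hpow.const_sub 1) (by simp)).const_sub 1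
    simpa using this
  have h2 := ((Real.continuousAt_log one_ne_zero).tendsto.comp h1).div_const (2 * Real.log q)
  simpa using h2

/-! ### Comparison of consecutive zeros -/

theorem stmt6 (q ν : ℝ) (hq0 : 0 < q) (hq1 : q < 1) (hν : -1 < ν)
    (j : ℕ → ℝ)
    (hjpos : ∀ k, 1 ≤ k → 0 < j k)
    (hjzero : ∀ k, 1 ≤ k → qBessel ν q (j k) = 0)
    (hjmono : ∀ k, 1 ≤ k → j k < j (k + 1))
    (hjall : ∀ x, 0 < x → qBessel ν q x = 0 → ∃ k, 1 ≤ k ∧ x = j k)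
    (hε : ∃ K : ℕ, ∀ k, K ≤ k →
      0 < (k : ℝ) + Real.log (j k) / Real.log q ∧
      (k : ℝ) + Real.log (j k) / Real.log q <
        Real.log (1 - q ^ (2 * ((k : ℝ) + ν)) / (1 - q ^ (2 * (k : ℝ)))) / (2 * Real.log q))
    :
    ∃ k₀ : ℕ, ∀ k, k₀ ≤ k →
      (↑(k + 1) : ℝ) + Real.log (j (k + 1)) / Real.log q <
        (k : ℝ) + Real.log (j k) / Real.log q := by
  set ε : ℕ → ℝ := fun k => (k : ℝ) + Real.log (j k) / Real.log q with hεdef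
  obtain ⟨K, hK⟩ := hε
  have hlq : Real.log q < 0 := Real.log_neg hq0 hq1
  have hlt : ∀ s t : ℝ, t < s → q ^ s < q ^ t := fun s t h =>
    Real.rpow_lt_rpow_of_exponent_gt hq0 hq1 h
  have hj : ∀ k, 1 ≤ k → j k = q ^ (ε k - k) := by
    intro k hk
    rw [Real.rpow_def_of_pos hq0]
    have : Real.log q * (ε k - k) = Real.log (j k) := by
      simp only [hεdef]
      rw [add_sub_cancel_left, mul_div_cancel₀ _ hlq.ne]
    rw [this, Real.exp_log (hjpos k hk)]
  have hjm : ∀ a b, 1 ≤ a → a ≤ b → j a ≤ j b := by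
    intro a b ha hab
    induction b, hab using Nat.le_induction with
    | base => exact le_rfl
    | succ b hab ih => exact ih.trans (hjmono b (ha.trans hab)).le
  have hgap : ∀ m, 1 ≤ m → ∀ x, j m < x → x < j (m + 1) → qBessel ν q x ≠ 0 := by
    intro m hm x h1 h2 h0
    obtain ⟨i, hi, rfl⟩ := hjall x ((hjpos m hm).trans h1) h0
    rcases Nat.lt_or_ge m i with h | h
    · exact absurd (hjm (m + 1) i (by omega) h) (not_le.2 h2)
    · exact absurd (hjm i m hi h) (not_le.2 h1)
  -- a vanishing prefactor would make every positive number a zero, against `hgap`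
  have hpre : qPochInf (q ^ (2 * (ν + 1))) (q ^ 2) / qPochInf (q ^ 2) (q ^ 2) ≠ 0 := by
    intro h
    have h12 := hjmono 1 le_rfl
    refine hgap 1 le_rfl ((j 1 + j (1 + 1)) / 2) (by linarith) (by linarith) ?_
    rw [qBessel_eq_mul_qSeries, h]
    simp
  have hG : ∀ x, 0 < x → (qBessel ν q x = 0 ↔ qSeries ν q x = 0) := by
    intro x hx
    rw [qBessel_eq_mul_qSeries]
    have := (Real.rpow_pos_of_pos hx ν).ne'
    simp [this, hpre]
  have hε0 : Tendsto ε atTop (nhds 0) := by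
    refine tendsto_of_tendsto_of_tendsto_of_le_of_le' tendsto_const_nhds
      (alpha_tendsto_zero ν hq0 hq1) ?_ ?_
    · filter_upwards [eventually_ge_atTop K] with k hk using (hK k hk).1.le
    · filter_upwards [eventually_ge_atTop K] with k hk using (hK k hk).2.le
  set b : ℝ := q ^ (2 * ν) with hbdef
  have hb : 0 < b := Real.rpow_pos_of_pos hq0 _
  have hbig : Tendsto (fun m : ℕ => q ^ (2 * (1 - (m : ℝ)))) atTop atTop := by
    have h : Tendsto (fun m : ℕ => q ^ 2 * ((q ^ 2)⁻¹) ^ m) atTop atTop :=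
      (tendsto_pow_atTop_atTop_of_one_lt
        ((one_lt_inv₀ (by positivity)).2 (by nlinarith))).const_mul_atTop (by positivity)
    refine h.congr fun m => ?_
    rw [inv_pow, ← pow_mul, ← Real.rpow_natCast, ← Real.rpow_natCast, ← Real.rpow_neg hq0.le,
      ← Real.rpow_add hq0]
    push_cast
    ring_nf
  obtain ⟨m₀, hm₀⟩ := eventually_atTop.1 (((hε0.eventually_lt_const one_pos).and
    (hbig.eventually_ge_atTop (2 + 2 * b))).and
      ((eventually_ge_atTop 1).and (eventually_ge_atTop K)))
  have hm₀1 : 1 ≤ m₀ := (hm₀ m₀ le_rfl).2.1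
  have hεpos : ∀ m, m₀ ≤ m → 0 < ε m := fun m hm => (hK m (hm₀ m hm).2.2).1
  obtain ⟨k₁, hk₁⟩ := eventually_atTop.1 (hε0.eventually_lt_const (hεpos m₀ le_rfl))
  refine ⟨max m₀ k₁, fun k hk => ?_⟩
  have hkm₀ : m₀ ≤ k := (le_max_left _ _).trans hk
  change ε (k + 1) < ε k
  have he₀ : ε (k + 1) < ε m₀ := hk₁ _ (by have := (le_max_right m₀ k₁).trans hk; omega)
  have he_pos : 0 < ε (k + 1) := hεpos _ (by omega)
  have he1 : ε (k + 1) < 1 := (hm₀ (k + 1) (by omega)).1.1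
  have hjk := hj (k + 1) (by omega)
  have hzk := hjzero (k + 1) (by omega)
  generalize ε (k + 1) = e at *
  set y : ℕ → ℝ := fun m => q ^ (e - m) with hy
  have hypos : ∀ m, 0 < y m := fun m => Real.rpow_pos_of_pos hq0 _
  have hyq : ∀ m, y m = q * y (m + 1) := by
    intro m
    simp only [hy]
    have h := Real.rpow_add hq0 1 (e - ((m + 1 : ℕ) : ℝ))
    rw [Real.rpow_one] at h
    rw [← h]
    push_cast
    ring_nf
  set u : ℕ → ℝ := fun m => qSeries ν q (y m) with hu
  have hrec : ∀ m, u (m + 2) + ((y (m + 1)) ^ 2 - 1 - b) * u (m + 1) + b * u m = 0 := by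
    intro m
    have h := qSeries_recurrence hq0 hq1 hν (y (m + 2))
    have e1 : y (m + 1) = q * y (m + 2) := hyq (m + 1)
    have e2 : y m = q ^ 2 * y (m + 2) := by rw [hyq m, e1]; ring
    simp only [hu]
    rw [e2, e1, mul_pow]
    exact h
  have hw : ∀ m, m₀ ≤ m → 2 + 2 * b ≤ (y m) ^ 2 := by
    intro m hm
    refine (hm₀ m hm).1.2.trans ?_
    simp only [hy]
    rw [← Real.rpow_natCast, ← Real.rpow_mul hq0.le]
    refine (hlt _ _ ?_).le
    push_cast
    linarith
  have huk : u (k + 1) = 0 := by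
    rw [hjk] at hzk
    exact (hG _ (hypos (k + 1))).1 hzk
  have halt := alternating_of_recurrence (w := fun m => y m ^ 2) hb hw hrec huk
  have hkey : ∀ m, m₀ ≤ m → m ≤ k → e < ε m := by
    intro m hm
    induction m, hm using Nat.le_induction with
    | base => exact fun _ => he₀
    | succ m hm ih =>
      intro hmk
      have hlt_m := ih (by omega)
      have hm1 : 1 ≤ m := hm₀1.trans hm
      by_contra hcon
      push Not at hcon
      have hl : j m < y m := by
        rw [hj m hm1]
        exact hlt _ _ (by linarith)
      have hr : y (m + 1) ≤ j (m + 1) := by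
        rw [hj (m + 1) (by omega)]
        exact Real.rpow_le_rpow_of_exponent_ge hq0 hq1.le (by linarith)
      have hyy : y m < y (m + 1) := hlt _ _ (by push_cast; linarith)
      have hum : u m ≠ 0 := fun h =>
        hgap m hm1 (y m) hl (hyy.trans_le hr) ((hG _ (hypos m)).2 h)
      have hum' : u (m + 1) ≠ 0 := by
        intro h
        have h1 := halt (m + 1) (by omega) hmk
        have h2 : u (m + 2) = 0 := by
          rw [h] at h1
          simp only [add_assoc, Nat.reduceAdd, zero_mul] at h1
          nlinarith [sq_nonneg (u (m + 2))]
        have h3 := hrec m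
        rw [h, h2] at h3
        have : b * u m = 0 := by linarith
        exact (mul_ne_zero hb.ne' hum) this
      have hneg : u m * u (m + 1) < 0 := by
        have h1 := halt m hm (by omega)
        have h2 : 0 < u (m + 1) ^ 2 := by positivity
        linarith
      have hcont : ContinuousOn (qSeries ν q) (Set.uIcc (y m) (y (m + 1))) := by
        rw [Set.uIcc_of_le hyy.le]
        exact (qSeries_continuousOn hq0 hq1 hν (y (m + 1))).mono
          (Set.Icc_subset_Icc_left (hypos m).le)
      have h0mem : (0 : ℝ) ∈ Set.uIcc (qSeries ν q (y m)) (qSeries ν q (y (m + 1))) := by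
        rw [Set.mem_uIcc]
        rcases mul_neg_iff.1 hneg with h | h
        · exact Or.inr ⟨h.2.le, h.1.le⟩
        · exact Or.inl ⟨h.1.le, h.2.le⟩
      obtain ⟨c, hc, hc0⟩ := intermediate_value_uIcc hcont h0mem
      rw [Set.uIcc_of_le hyy.le] at hc
      have hcne : c ≠ y (m + 1) := by
        rintro rfl
        exact hum' hc0
      have hclt : c < j (m + 1) := (lt_of_le_of_ne hc.2 hcne).trans_le hr
      exact hgap m hm1 c (hl.trans_le hc.1) hclt ((hG c ((hypos m).trans_le hc.1)).2 hc0)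
  exact hkey k hkm₀ le_rfl
end
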